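/- arXiv:2205.00138 — 2 statements merged into one kernel-verified Lean document; each statement's English description precedes it below -/
import Mathlib

section
/- Let I and L be positive integers, and for each i ∈ Fin I let p i : Fin L → ℝ≥0 be nonincreasing. Define the weight of a tuple u : Fin I → Fin L by W(u) = ∏_{i} p i (u i). Assume W is injective (no two distinct tuples have equal weight), and let e : Fin (L^I) ≃ (Fin I → Fin L) be an equivalence enumerating all tuples in strictly decreasing order of weight, i.e., m < n implies W(e m) > W(e n). Then for every n ∈ Fin (L^I) such that e n is not the all-zero tuple, there exist m ∈ Fin (L^I) with m < n and a coordinate i ∈ Fin I such that e n is the increment of e m at coordinate i (i.e., (e n) i = (e m) i + 1 and (e n) j = (e m) j for all j ≠ i). (Lemma 1 of the paper: the n-th most likely choice can always be generated from one of the top-(n−1) candidates with only one of its segments changing its non-zero position into the next maximum-probability position.) -/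
/-!
A tuple other than the all-zero one has a nonzero coordinate `i`. Lowering that coordinate by one
gives a different tuple whose weight is at least as large, because each `p i` is nonincreasing and
products of nonnegative factors are monotone. As the enumeration is strictly decreasing in weight,
the lowered tuple precedes the original one, which is its increment at `i`.
-/

open scoped NNReal

/-- Lemma 1 of the paper: if `e` enumerates all tuples in strictly
decreasing order of weight (weights being pairwise distinct), then every non-top
candidate `e n` is the increment at one coordinate of some earlier candidate `e m`, `m < n`. -/
theorem stmt_4 (I L : ℕ) (hI : 1 ≤ I) (hL : 1 ≤ L)
    (p : Fin I → Fin L → ℝ≥0) (hp : ∀ i, Antitone (p i))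
    (hW : Function.Injective (fun u : Fin I → Fin L => ∏ i, p i (u i)))
    (e : Fin (L ^ I) ≃ (Fin I → Fin L))
    (he : ∀ m n : Fin (L ^ I), m < n → (∏ i, p i (e n i)) < ∏ i, p i (e m i))
    (n : Fin (L ^ I)) (hn : e n ≠ fun _ => (⟨0, hL⟩ : Fin L)) :
    ∃ m : Fin (L ^ I), m < n ∧ ∃ i : Fin I,
      ((e n) i : ℕ) = ((e m) i : ℕ) + 1 ∧ ∀ j, j ≠ i → e n j = e m j := by
  obtain ⟨i, hi⟩ := Function.ne_iff.mp hn
  have hpos : 0 < (e n i : ℕ) :=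
    Nat.pos_of_ne_zero fun h => hi (Fin.ext h)
  have hlt : (e n i : ℕ) - 1 < L := by omega
  obtain ⟨m, hm⟩ := e.surjective (Function.update (e n) i ⟨(e n i : ℕ) - 1, hlt⟩)
  have hmi : (e m i : ℕ) = (e n i : ℕ) - 1 := by simp [hm]
  have hmj : ∀ j, j ≠ i → e n j = e m j := fun j hj => by simp [hm, hj]
  have hle : ∀ j, e m j ≤ e n j := by
    intro j
    by_cases hj : j = i
    · subst hj
      rw [Fin.le_def]
      omega
    · exact (hmj j hj).ge
  have hne : m ≠ n := by
    rintro rfl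
    omega
  refine ⟨m, lt_of_le_of_ne (not_lt.mp fun hnm => ?_) hne, i, by omega, hmj⟩
  exact (he n m hnm).not_ge (Finset.prod_le_prod' fun j _ => hp j (hle j))
end

section
/- Let I and L be positive integers, and for each i ∈ Fin I let p i : Fin L → ℝ≥0 be nonincreasing. Define the weight of a tuple u : Fin I → Fin L by W(u) = ∏_{i} p i (u i). Then for every natural number n with 1 ≤ n ≤ L^I there exists a finite set S of tuples in Fin I → Fin L with |S| = n such that: (a) the all-zero tuple belongs to S; (b) every element of S other than the all-zero tuple is the increment at some coordinate of some element of S; and (c) S consists of n maximal-weight tuples, i.e., for every u ∈ S and every tuple v ∉ S, W(v) ≤ W(u). (Correctness of the recursive selection method: for every n there is a set of n most likely candidates that is generated from the all-zero candidate by single-segment updates.) -/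
/-!
The weight is antitone for the product order on tuples. For an antitone function on a finite
partial order, a set of `n` maximal-weight elements can always be chosen to be a lower set: grow it
one element at a time, adding an element of the complement of largest weight and, among those,
one that is minimal for the order (`exists_lowerSet_card_eq`). A nonempty lower set of tuples
contains the all-zero tuple and is stable under decrementing any nonzero coordinate, which
exhibits each nonzero element as an increment of another element of the set.
-/

open scoped NNReal

theorem exists_lowerSet_card_eq {α β : Type*} [Fintype α] [PartialOrder α] [LinearOrder β]
    {W : α → β} (hW : Antitone W) (n : ℕ) (hn : n ≤ Fintype.card α) :
    ∃ S : Finset α, S.card = n ∧ IsLowerSet (S : Set α) ∧ ∀ u ∈ S, ∀ v ∉ S, W v ≤ W u := by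
  classical
  induction n with
  | zero => exact ⟨∅, by simp, by simp [isLowerSet_empty], by simp⟩
  | succ k ih =>
    obtain ⟨S, hc, hl, hm⟩ := ih (by omega)
    have hne : Sᶜ.Nonempty := by
      rw [← Finset.card_pos, Finset.card_compl]
      omega
    obtain ⟨a, ha, hmax⟩ := Finset.exists_max_image Sᶜ W hne
    obtain ⟨b, hb⟩ := (Sᶜ.filter fun x => W x = W a).exists_minimal ⟨a, by simpa using ha⟩
    have hb' := hb.prop
    simp only [Finset.mem_filter, Finset.mem_compl] at hb' hmax
    refine ⟨insert b S, by rw [Finset.card_insert_of_notMem hb'.1, hc], ?_, ?_⟩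
    · intro x y hyx hx
      simp only [Finset.coe_insert, Set.mem_insert_iff, Finset.mem_coe] at hx ⊢
      rcases hx with rfl | hx
      · by_contra! hy
        -- An element `y < b` outside `S` would have the same maximal weight as `b`.
        have hWy : W y = W a := le_antisymm (hmax y hy.2) (hb'.2 ▸ hW hyx)
        exact hy.1 (le_antisymm hyx (hb.le_of_le (by simp [hy.2, hWy]) hyx))
      · exact Or.inr (hl hyx hx)
    · intro u hu v hv
      simp only [Finset.mem_insert, not_or] at hu hv
      rcases hu with rfl | hu
      · exact hb'.2 ▸ hmax v hv.2
      · exact hm u hu v hv.2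

/-- For every `1 ≤ n ≤ L ^ I` there is a set `S` of `n` maximal-weight
tuples containing the all-zero tuple such that every other element of `S` is the
increment at some coordinate of an element of `S`. -/
theorem stmt_5 (I L : ℕ) (hI : 1 ≤ I) (hL : 1 ≤ L)
    (p : Fin I → Fin L → ℝ≥0) (hp : ∀ i, Antitone (p i))
    (n : ℕ) (hn1 : 1 ≤ n) (hn2 : n ≤ L ^ I) :
    ∃ S : Finset (Fin I → Fin L),
      S.card = n ∧
      (fun _ => (⟨0, hL⟩ : Fin L)) ∈ S ∧
      (∀ u ∈ S, u ≠ (fun _ => (⟨0, hL⟩ : Fin L)) →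
        ∃ v ∈ S, ∃ i : Fin I,
          (u i : ℕ) = (v i : ℕ) + 1 ∧ ∀ j, j ≠ i → u j = v j) ∧
      (∀ u ∈ S, ∀ v : Fin I → Fin L, v ∉ S →
        (∏ i, p i (v i)) ≤ ∏ i, p i (u i)) := by
  classical
  have hW : Antitone fun u : Fin I → Fin L => ∏ i, p i (u i) := fun u v huv =>
    Finset.prod_le_prod' fun i _ => hp i (huv i)
  obtain ⟨S, hc, hl, hm⟩ := exists_lowerSet_card_eq hW n (by simpa using hn2)
  refine ⟨S, hc, ?_, ?_, hm⟩
  · obtain ⟨u, hu⟩ := Finset.card_pos.mp (hc ▸ hn1 : 0 < S.card)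
    exact hl (fun i => Fin.mk_le_of_le_val (Nat.zero_le _)) hu
  · intro u hu hne
    obtain ⟨i, hi⟩ := Function.ne_iff.mp hne
    have hi' : (u i : ℕ) ≠ 0 := fun h => hi (Fin.ext h)
    refine ⟨Function.update u i ⟨u i - 1, by omega⟩, hl ?_ hu, i, ?_, ?_⟩
    · exact update_le_self_iff.mpr (Fin.mk_le_of_le_val (Nat.sub_le _ _))
    · simp only [Function.update_self]
      omega
    · intro j hj
      simp [hj]
end
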